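/- arXiv:2602.23218 — 2 statements merged into one kernel-verified Lean document; each statement's English description precedes it below -/
import Mathlib

section
/- (Observation 5.13: uniformity of the local operator j_f.) There exists a natural number realizing, simultaneously for all partial functions f : ℕ →. ℕ and all p, q : Set ℕ, the realizability implication (p → q) → (m_f(p) → m_f(q)); and there exists a natural number belonging to ⋂_{f : ℕ →. ℕ} ⟦is-lop[j_f]⟧, i.e. witnessing uniformly in f that j_f is a local operator in the effective topos. -/
/-- Kleene application: evaluation of the `e`-th partial computable function at `n`. -/
def kapp (e n : ℕ) : Part ℕ := (Denumerable.ofNat Nat.Partrec.Code e).eval n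

/-- Realizability conjunction. -/
def rAnd (p q : Set ℕ) : Set ℕ := {x | ∃ a ∈ p, ∃ b ∈ q, x = Nat.pair a b}

/-- Realizability disjunction. -/
def rOr (p q : Set ℕ) : Set ℕ :=
  {x | (∃ a ∈ p, x = Nat.pair 0 a) ∨ ∃ b ∈ q, x = Nat.pair 1 b}

/-- Realizability implication. -/
def rImp (p q : Set ℕ) : Set ℕ := {e | ∀ n ∈ p, ∃ m ∈ kapp e n, m ∈ q}

/-- The set `⟦is-lop[j]⟧` of realizers witnessing that `j` is a local operator. -/
def isLop (j : Set ℕ → Set ℕ) : Set ℕ :=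
  rAnd (⋂ p : Set ℕ, rImp p (j p))
    (rAnd (⋂ p : Set ℕ, rImp (j (j p)) (j p))
      (⋂ p : Set ℕ, ⋂ q : Set ℕ, rImp (rImp p q) (rImp (j p) (j q))))

/-- The set `⟦j ≤ k⟧` of realizers of the pointwise order between operators. -/
def rLe (j k : Set ℕ → Set ℕ) : Set ℕ := ⋂ p : Set ℕ, rImp (j p) (k p)

/-- The set `(j ≡ k)` of realizers of the equivalence of two operators. -/
def rEquiv (j k : Set ℕ → Set ℕ) : Set ℕ := rAnd (rLe j k) (rLe k j)

/-- The standard lop-frame `P_S` associated with a set `S` of local operators. -/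
def PS (S : Set (Set ℕ → Set ℕ)) (k : Set ℕ → Set ℕ) : Set ℕ :=
  ⋃ l ∈ S, rAnd (isLop l) (rEquiv l k)

/-- The principal upper set `↑j` of an operator `j`. -/
def upSet (j : Set ℕ → Set ℕ) : Set (Set ℕ → Set ℕ) := {k | (rLe j k).Nonempty}

/-- A predicate `Φ` on operators is `≡`-relational. -/
def Relational (Φ : (Set ℕ → Set ℕ) → Set ℕ) : Prop :=
  (⋂ j : Set ℕ → Set ℕ, ⋂ k : Set ℕ → Set ℕ,
    rImp (rAnd (Φ j) (rEquiv j k)) (Φ k)).Nonempty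

/-- The graph predicate `D_f` of a partial function `f`. -/
def Df (f : ℕ →. ℕ) (n : ℕ) : Set ℕ := {x | ∃ m ∈ f n, x = Nat.pair n m}

/-- The monotone map `m_f`. -/
def mf (f : ℕ →. ℕ) (p : Set ℕ) : Set ℕ := ⋃ n : ℕ, rImp (Df f n) p

/-- The local operator `j_f` induced by a partial function `f`. -/
def jf (f : ℕ →. ℕ) (p : Set ℕ) : Set ℕ :=
  ⋂ q : Set ℕ, rImp (rAnd (rImp p q) (rImp (mf f q) q)) q

/-!
Sets of realizers indexed by an arbitrary type are ordered by the existence of one number realizing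
all the implications at once. This order validates intuitionistic natural deduction, with
intersections and unions over index types as quantifiers. A fact is therefore realized uniformly in
`f`, `p` and `q` as soon as it has an intuitionistic proof in which they are parameters; for `j_f`
that proof only uses that `j_f p` is internally the intersection of all sets `q` with `p → q` and
`m_f q → q`.
-/

/-- Uniform entailment between indexed families of sets of realizers: a single number realizes
all the implications `φ i → ψ i`. This is the order of the effective tripos. -/
def Entails {ι : Type*} (φ ψ : ι → Set ℕ) : Prop := ∃ e : ℕ, ∀ i, e ∈ rImp (φ i) (ψ i)

/-- The internal intersection, by a second-order encoding, of all `m`-prefixed sets `q` above `p`: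
those with realizers of `p → q` and `m q → q`. The operator `j_f` is the instance `m = m_f`. -/
def prefixedClosure (m : Set ℕ → Set ℕ) (p : Set ℕ) : Set ℕ :=
  ⋂ q : Set ℕ, rImp (rAnd (rImp p q) (rImp (m q) q)) q

theorem partrec₂_kapp : Partrec₂ kapp :=
  Nat.Partrec.Code.eval_part.comp₂
    ((Computable.ofNat Nat.Partrec.Code).comp Computable.fst) Computable.snd

theorem exists_kapp_eq {g : ℕ →. ℕ} (hg : Partrec g) : ∃ e, ∀ n, kapp e n = g n := by
  obtain ⟨c, rfl⟩ := Nat.Partrec.Code.exists_code.1 (Partrec.nat_iff.1 hg)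
  exact ⟨Encodable.encode c, fun n => by rw [kapp, Denumerable.ofNat_encode]⟩

theorem exists_computable_kapp_eq_kapp_pair (e : ℕ) :
    ∃ s : ℕ → ℕ, Computable s ∧ ∀ a n, kapp (s a) n = kapp e (Nat.pair a n) := by
  obtain ⟨smn, smn_computable, eval_smn⟩ := Nat.Partrec.Code.smn
  refine ⟨fun a => Encodable.encode (smn (Denumerable.ofNat _ e) a),
    Computable.encode.comp (smn_computable.comp (Computable.const _) Computable.id), fun a n => ?_⟩
  rw [kapp, Denumerable.ofNat_encode, eval_smn, kapp]

namespace Entails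

variable {ι : Type*} {Γ φ ψ : ι → Set ℕ}

theorem of_partrec {g : ℕ →. ℕ} (hg : Partrec g) (h : ∀ i, ∀ n ∈ φ i, ∃ k ∈ g n, k ∈ ψ i) :
    Entails φ ψ := by
  obtain ⟨e, he⟩ := exists_kapp_eq hg
  exact ⟨e, fun i n hn => by simpa only [he] using h i n hn⟩

theorem of_computable {g : ℕ → ℕ} (hg : Computable g) (h : ∀ i, ∀ n ∈ φ i, g n ∈ ψ i) :
    Entails φ ψ :=
  of_partrec hg.partrec fun i n hn => ⟨g n, Part.mem_some _, h i n hn⟩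

theorem of_subset (h : ∀ i, φ i ⊆ ψ i) : Entails φ ψ :=
  of_computable Computable.id fun i _ hn => h i hn

theorem refl (φ : ι → Set ℕ) : Entails φ φ := of_subset fun _ => subset_rfl

theorem trans (hφ : Entails Γ φ) (hψ : Entails φ ψ) : Entails Γ ψ := by
  obtain ⟨a, ha⟩ := hφ
  obtain ⟨b, hb⟩ := hψ
  refine of_partrec (g := fun n => (kapp a n).bind (kapp b))
    ((partrec₂_kapp.comp (Computable.const a) Computable.id).bind
      (partrec₂_kapp.comp (Computable.const b) Computable.snd)) fun i n hn => ?_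
  obtain ⟨k, hk, hkφ⟩ := ha i n hn
  obtain ⟨l, hl, hlψ⟩ := hb i k hkφ
  exact ⟨l, Part.mem_bind hk hl, hlψ⟩

theorem and_intro (hφ : Entails Γ φ) (hψ : Entails Γ ψ) :
    Entails Γ fun i => rAnd (φ i) (ψ i) := by
  obtain ⟨a, ha⟩ := hφ
  obtain ⟨b, hb⟩ := hψ
  have pair_partrec : Partrec fun n => (kapp a n).bind fun k => (kapp b n).map (Nat.pair k) :=
    (partrec₂_kapp.comp (Computable.const a) Computable.id).bind <|
      (partrec₂_kapp.comp (Computable.const b) Computable.fst).map <|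
        Primrec₂.natPair.to_comp.comp (Computable.snd.comp Computable.fst) Computable.snd
  refine of_partrec pair_partrec fun i n hn => ?_
  obtain ⟨k, hk, hkφ⟩ := ha i n hn
  obtain ⟨l, hl, hlψ⟩ := hb i n hn
  exact ⟨Nat.pair k l, Part.mem_bind hk (Part.mem_map _ hl), k, hkφ, l, hlψ, rfl⟩

theorem and_left (h : Entails Γ fun i => rAnd (φ i) (ψ i)) : Entails Γ φ := by
  refine h.trans (of_computable (Computable.fst.comp Computable.unpair) ?_)
  rintro i _ ⟨a, ha, b, -, rfl⟩
  rwa [Nat.unpair_pair]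

theorem and_right (h : Entails Γ fun i => rAnd (φ i) (ψ i)) : Entails Γ ψ := by
  refine h.trans (of_computable (Computable.snd.comp Computable.unpair) ?_)
  rintro i _ ⟨a, -, b, hb, rfl⟩
  rwa [Nat.unpair_pair]

theorem imp_intro (h : Entails (fun i => rAnd (Γ i) (φ i)) ψ) :
    Entails Γ fun i => rImp (φ i) (ψ i) := by
  obtain ⟨e, he⟩ := h
  obtain ⟨s, hs, kapp_s⟩ := exists_computable_kapp_eq_kapp_pair e
  refine of_computable hs fun i a ha n hn => ?_
  rw [kapp_s]
  exact he i _ ⟨a, ha, n, hn, rfl⟩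

theorem imp_elim (h : Entails Γ fun i => rImp (φ i) (ψ i)) (hφ : Entails Γ φ) : Entails Γ ψ := by
  refine (h.and_intro hφ).trans (of_partrec (g := fun n => kapp n.unpair.1 n.unpair.2)
    (partrec₂_kapp.comp (Computable.fst.comp Computable.unpair)
      (Computable.snd.comp Computable.unpair)) ?_)
  rintro i _ ⟨a, ha, n, hn, rfl⟩
  simpa only [Nat.unpair_pair] using ha n hn

theorem imp_trans {χ : ι → Set ℕ} (hφψ : Entails Γ fun i => rImp (φ i) (ψ i))
    (hψχ : Entails Γ fun i => rImp (ψ i) (χ i)) : Entails Γ fun i => rImp (φ i) (χ i) :=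
  have weaken_Γ : Entails (fun i => rAnd (Γ i) (φ i)) Γ := (refl _).and_left
  have hψ := (weaken_Γ.trans hφψ).imp_elim (refl _).and_right
  imp_intro ((weaken_Γ.trans hψχ).imp_elim hψ)

section Quantifiers

variable {κ : ι → Type*} {χ : ∀ i, κ i → Set ℕ}

theorem iInter_intro [∀ i, Nonempty (κ i)]
    (h : Entails (fun x : (i : ι) × κ i => Γ x.1) fun x => χ x.1 x.2) :
    Entails Γ fun i => ⋂ k, χ i k := by
  obtain ⟨e, he⟩ := h
  refine ⟨e, fun i n hn => ?_⟩
  obtain ⟨l, hl, -⟩ := he ⟨i, Classical.arbitrary _⟩ n hn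
  -- The output `l` does not depend on `k`, because the realizer `e` and its input do not.
  refine ⟨l, hl, Set.mem_iInter.2 fun k => ?_⟩
  obtain ⟨l', hl', hl'χ⟩ := he ⟨i, k⟩ n hn
  exact Part.mem_unique hl' hl ▸ hl'χ

theorem iInter_elim (h : Entails Γ fun i => ⋂ k, χ i k) (k : ∀ i, κ i) :
    Entails Γ fun i => χ i (k i) :=
  h.trans (of_subset fun i => Set.iInter_subset (χ i) (k i))

theorem iUnion_intro (k : ∀ i, κ i) (h : Entails Γ fun i => χ i (k i)) :
    Entails Γ fun i => ⋃ k, χ i k :=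
  h.trans (of_subset fun i => Set.subset_iUnion (χ i) (k i))

theorem iUnion_elim
    (h : Entails (fun x : (i : ι) × κ i => rAnd (Γ x.1) (χ x.1 x.2)) fun x => ψ x.1) :
    Entails (fun i => rAnd (Γ i) (⋃ k, χ i k)) ψ := by
  obtain ⟨e, he⟩ := h
  refine ⟨e, ?_⟩
  rintro i _ ⟨a, ha, b, hb, rfl⟩
  obtain ⟨k, hk⟩ := Set.mem_iUnion.1 hb
  exact he ⟨i, k⟩ _ ⟨a, ha, b, hk, rfl⟩

end Quantifiers

theorem iUnion_imp_mono {κ : ι → Type*} (D : ∀ i, κ i → Set ℕ) (φ ψ : ι → Set ℕ) :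
    Entails (fun i => rImp (φ i) (ψ i)) fun i =>
      rImp (⋃ k, rImp (D i k) (φ i)) (⋃ k, rImp (D i k) (ψ i)) :=
  -- Projections of `refl _` select hypotheses from the context, a left-nested conjunction.
  imp_intro <| iUnion_elim <| iUnion_intro (fun x => x.2) <|
    imp_trans (refl _).and_right (refl _).and_left

section PrefixedClosure

variable {m : ι → Set ℕ → Set ℕ}

theorem prefixedClosure_intro
    (h : Entails (fun x : (_ : ι) × Set ℕ =>
      rAnd (Γ x.1) (rAnd (rImp (φ x.1) x.2) (rImp (m x.1 x.2) x.2))) fun x => x.2) :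
    Entails Γ fun i => prefixedClosure (m i) (φ i) :=
  iInter_intro (imp_intro h)

theorem prefixedClosure_elim (h : Entails Γ fun i => prefixedClosure (m i) (φ i))
    (hφ : Entails Γ fun i => rImp (φ i) (ψ i)) (hm : Entails Γ fun i => rImp (m i (ψ i)) (ψ i)) :
    Entails Γ ψ :=
  (h.iInter_elim ψ).imp_elim (hφ.and_intro hm)

variable (m φ ψ)

theorem prefixedClosure_unit : Entails φ fun i => prefixedClosure (m i) (φ i) :=
  prefixedClosure_intro ((refl _).and_right.and_left.imp_elim (refl _).and_left)

theorem prefixedClosure_mult :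
    Entails (fun i => prefixedClosure (m i) (prefixedClosure (m i) (φ i)))
      fun i => prefixedClosure (m i) (φ i) := by
  -- The inner closure is eliminated at the same prefixed set as the outer one.
  refine prefixedClosure_intro <|
    prefixedClosure_elim (m := fun x => m x.1) (φ := fun x => prefixedClosure (m x.1) (φ x.1))
      ?closure ?above ?prefixed
  case closure => exact (refl _).and_left
  case prefixed => exact (refl _).and_right.and_right
  case above =>
    exact imp_intro <| prefixedClosure_elim (refl _).and_right
      (refl _).and_left.and_right.and_left (refl _).and_left.and_right.and_right

theorem prefixedClosure_mono :
    Entails (fun i => rImp (φ i) (ψ i)) fun i =>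
      rImp (prefixedClosure (m i) (φ i)) (prefixedClosure (m i) (ψ i)) := by
  refine imp_intro <| prefixedClosure_intro <|
    prefixedClosure_elim (m := fun x => m x.1) (φ := fun x => φ x.1) ?closure ?above ?prefixed
  case closure => exact (refl _).and_left.and_right
  case prefixed => exact (refl _).and_right.and_right
  case above => exact imp_trans (refl _).and_left.and_left (refl _).and_right.and_left

end PrefixedClosure

end Entails

theorem exists_forall_mem_rImp_iUnion_rImp :
    ∃ e : ℕ, ∀ (κ : Type*) (D : κ → Set ℕ) (p q : Set ℕ),
      e ∈ rImp (rImp p q) (rImp (⋃ k, rImp (D k) p) (⋃ k, rImp (D k) q)) := by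
  obtain ⟨e, he⟩ := Entails.iUnion_imp_mono
    (D := fun x : (κ : Type _) × (κ → Set ℕ) × Set ℕ × Set ℕ => x.2.1)
    (φ := fun x => x.2.2.1) (ψ := fun x => x.2.2.2)
  exact ⟨e, fun κ D p q => he ⟨κ, D, p, q⟩⟩

theorem exists_forall_mem_isLop_prefixedClosure :
    ∃ e : ℕ, ∀ m : Set ℕ → Set ℕ, e ∈ isLop (prefixedClosure m) := by
  obtain ⟨e₁, unit⟩ := Entails.prefixedClosure_unit
    (m := fun x : (Set ℕ → Set ℕ) × Set ℕ => x.1) (φ := fun x => x.2)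
  obtain ⟨e₂, mult⟩ := Entails.prefixedClosure_mult
    (m := fun x : (Set ℕ → Set ℕ) × Set ℕ => x.1) (φ := fun x => x.2)
  obtain ⟨e₃, mono⟩ := Entails.prefixedClosure_mono
    (m := fun x : (Set ℕ → Set ℕ) × Set ℕ × Set ℕ => x.1)
    (φ := fun x => x.2.1) (ψ := fun x => x.2.2)
  refine ⟨Nat.pair e₁ (Nat.pair e₂ e₃), fun m => ⟨e₁, ?_, _, ⟨e₂, ?_, e₃, ?_, rfl⟩, rfl⟩⟩
  · exact Set.mem_iInter.2 fun p => unit (m, p)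
  · exact Set.mem_iInter.2 fun p => mult (m, p)
  · exact Set.mem_iInter₂.2 fun p q => mono (m, p, q)

theorem jf_uniform_general :
    (∃ e : ℕ, ∀ (κ : Type*) (D : κ → Set ℕ) (p q : Set ℕ),
        e ∈ rImp (rImp p q) (rImp (⋃ k, rImp (D k) p) (⋃ k, rImp (D k) q))) ∧
    (∃ e : ℕ, ∀ m : Set ℕ → Set ℕ, e ∈ isLop (prefixedClosure m)) :=
  ⟨exists_forall_mem_rImp_iUnion_rImp, exists_forall_mem_isLop_prefixedClosure⟩

/-- Observation 5.13: the monotonicity of `m_f` and the fact that `j_f` is a local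
operator in the effective topos are realized uniformly in `f`. -/
theorem jf_uniform :
    (∃ e : ℕ, ∀ (f : ℕ →. ℕ) (p q : Set ℕ),
        e ∈ rImp (rImp p q) (rImp (mf f p) (mf f q))) ∧
    (∃ e : ℕ, ∀ f : ℕ →. ℕ, e ∈ isLop (jf f)) := by
  obtain ⟨⟨a, ha⟩, b, hb⟩ := jf_uniform_general
  exact ⟨⟨a, fun f => ha ℕ (Df f)⟩, b, fun f => hb (mf f)⟩
end

section
/- (Limitation of j-realizability for double negations, Proposition 6.?.) For every local operator j in the effective topos and every arithmetic sentence φ: if j(⟦¬¬φ⟧_j) is nonempty, then j(⟦φ⟧_j) is nonempty. (Here ¬φ abbreviates φ → ⊥ where ⊥ is the false atomic sentence 0 = S 0; nonemptiness of j(⟦ψ⟧_j) expresses validity of the j-translation of ψ in the effective topos.) -/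
/-- Codes for primitive recursive function symbols (with arities). -/
inductive PRF : ℕ → Type where
  | zero : PRF 0
  | succ : PRF 1
  | proj : {n : ℕ} → Fin n → PRF n
  | comp : {m n : ℕ} → PRF m → (Fin m → PRF n) → PRF n
  | prec : {n : ℕ} → PRF n → PRF (n + 2) → PRF (n + 1)

/-- Standard evaluation of a primitive recursive function symbol. -/
def PRF.eval : {n : ℕ} → PRF n → (Fin n → ℕ) → ℕ
  | _, .zero, _ => 0
  | _, .succ, v => v 0 + 1
  | _, .proj i, v => v i
  | _, .comp g h, v => g.eval fun i => (h i).eval v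
  | _, .prec g h, v =>
      Nat.rec (g.eval fun i => v i.succ)
        (fun y ih => h.eval (Fin.cons y (Fin.cons ih fun i => v i.succ)))
        (v 0)

/-- Terms of the language of arithmetic: variables (de Bruijn indices) and
applications of primitive recursive function symbols. -/
inductive ATerm : Type where
  | var : ℕ → ATerm
  | func : {n : ℕ} → PRF n → (Fin n → ATerm) → ATerm

/-- The constant `0`. -/
def ATerm.zero : ATerm := .func PRF.zero fun i => i.elim0

/-- The successor `S t`. -/
def ATerm.S (t : ATerm) : ATerm := .func PRF.succ fun _ => t

/-- Standard evaluation of a term under a parameter assignment. -/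
def ATerm.eval (ρ : ℕ → ℕ) : ATerm → ℕ
  | .var n => ρ n
  | .func f ts => f.eval fun i => (ts i).eval ρ

def ATerm.rename (σ : ℕ → ℕ) : ATerm → ATerm
  | .var n => .var (σ n)
  | .func f ts => .func f fun i => (ts i).rename σ

def ATerm.subst (σ : ℕ → ATerm) : ATerm → ATerm
  | .var n => σ n
  | .func f ts => .func f fun i => (ts i).subst σ

/-- Lift a substitution under a binder. -/
def liftSub (σ : ℕ → ATerm) : ℕ → ATerm
  | 0 => .var 0
  | n + 1 => (σ n).rename Nat.succ

/-- Formulas of arithmetic (atomic formulas are equations between terms;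
de Bruijn indexing of variables). -/
inductive AFml : Type where
  | eq : ATerm → ATerm → AFml
  | and : AFml → AFml → AFml
  | or : AFml → AFml → AFml
  | imp : AFml → AFml → AFml
  | ex : AFml → AFml
  | all : AFml → AFml

def AFml.subst : AFml → (ℕ → ATerm) → AFml
  | .eq t s, σ => .eq (t.subst σ) (s.subst σ)
  | .and φ ψ, σ => .and (φ.subst σ) (ψ.subst σ)
  | .or φ ψ, σ => .or (φ.subst σ) (ψ.subst σ)
  | .imp φ ψ, σ => .imp (φ.subst σ) (ψ.subst σ)
  | .ex φ, σ => .ex (φ.subst (liftSub σ))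
  | .all φ, σ => .all (φ.subst (liftSub σ))

/-- `⊥` is the false atomic sentence `0 = S 0`. -/
def AFml.bot : AFml := .eq ATerm.zero (ATerm.S ATerm.zero)

/-- `¬φ := φ → ⊥`. -/
def AFml.neg (φ : AFml) : AFml := φ.imp AFml.bot

/-- The substitution instantiating the bound variable `0` by the term `t`. -/
def sub0 (t : ATerm) : ℕ → ATerm
  | 0 => t
  | n + 1 => .var n

/-- The substitution replacing the variable `0` by `S (var 0)`. -/
def subS : ℕ → ATerm
  | 0 => ATerm.S (.var 0)
  | n + 1 => .var (n + 1)

/-- The shift substitution (weakening). -/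
def shiftSub : ℕ → ATerm := fun n => .var (n + 1)

/-- The non-logical axioms of Heyting arithmetic: the successor axiom, the
defining equations of all primitive recursive function symbols, and the
induction scheme. -/
inductive HAax : AFml → Prop where
  | succ_ne_zero : HAax (.all (AFml.eq (ATerm.S (.var 0)) ATerm.zero).neg)
  | proj_eq {n : ℕ} (i : Fin n) :
      HAax (.eq (.func (PRF.proj i) fun k => .var k.1) (.var i.1))
  | comp_eq {m n : ℕ} (g : PRF m) (h : Fin m → PRF n) :
      HAax (.eq (.func (PRF.comp g h) fun k => .var k.1)
        (.func g fun i => .func (h i) fun k => .var k.1))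
  | prec_zero {n : ℕ} (g : PRF n) (h : PRF (n + 2)) :
      HAax (.eq (.func (PRF.prec g h) (Fin.cons ATerm.zero fun k : Fin n => .var k.1))
        (.func g fun k => .var k.1))
  | prec_succ {n : ℕ} (g : PRF n) (h : PRF (n + 2)) :
      HAax (.eq (.func (PRF.prec g h) (Fin.cons (ATerm.S (.var n)) fun k : Fin n => .var k.1))
        (.func h (Fin.cons (.var n) (Fin.cons
          (.func (PRF.prec g h) (Fin.cons (.var n) fun k : Fin n => .var k.1))
          fun k : Fin n => .var k.1))))
  | ind (φ : AFml) :
      HAax (((φ.subst (sub0 ATerm.zero)).and (.all (φ.imp (φ.subst subS)))).imp (.all φ))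

/-- Hilbert-style intuitionistic derivability from a theory `T`
(Gödel's system for `IQC`, deeply embedded). -/
inductive Deriv (T : AFml → Prop) : AFml → Prop where
  -- non-logical axioms
  | ax {φ : AFml} : T φ → Deriv T φ
  -- logical axioms
  | botE (φ : AFml) : Deriv T (AFml.bot.imp φ)
  | andE (φ ψ : AFml) : Deriv T ((φ.and ψ).imp φ)
  | orI (φ ψ : AFml) : Deriv T (φ.imp (φ.or ψ))
  | orContr (φ : AFml) : Deriv T ((φ.or φ).imp φ)
  | andContr (φ : AFml) : Deriv T (φ.imp (φ.and φ))
  | orComm (φ ψ : AFml) : Deriv T ((φ.or ψ).imp (ψ.or φ))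
  | andComm (φ ψ : AFml) : Deriv T ((φ.and ψ).imp (ψ.and φ))
  | allE (φ : AFml) (t : ATerm) : Deriv T ((AFml.all φ).imp (φ.subst (sub0 t)))
  | exI (φ : AFml) (t : ATerm) : Deriv T ((φ.subst (sub0 t)).imp (AFml.ex φ))
  -- rules
  | mp {φ ψ : AFml} : Deriv T φ → Deriv T (φ.imp ψ) → Deriv T ψ
  | syl {φ ψ χ : AFml} : Deriv T (φ.imp ψ) → Deriv T (ψ.imp χ) → Deriv T (φ.imp χ)
  | exp {φ ψ χ : AFml} : Deriv T ((φ.and ψ).imp χ) → Deriv T (φ.imp (ψ.imp χ))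
  | imp' {φ ψ χ : AFml} : Deriv T (φ.imp (ψ.imp χ)) → Deriv T ((φ.and ψ).imp χ)
  | orMono {φ ψ χ : AFml} : Deriv T (φ.imp ψ) → Deriv T ((φ.or χ).imp (ψ.or χ))
  | allI {φ ψ : AFml} : Deriv T ((ψ.subst shiftSub).imp φ) → Deriv T (ψ.imp (AFml.all φ))
  | exE {φ ψ : AFml} : Deriv T (φ.imp (ψ.subst shiftSub)) → Deriv T ((AFml.ex φ).imp ψ)

/-- Extend a parameter assignment in `ℕ` by one value. -/
def Env.cons (y : ℕ) (ρ : ℕ → ℕ) : ℕ → ℕ := fun n =>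
  match n with
  | 0 => y
  | n + 1 => ρ n

/-- The `j`-realizability set `⟦φ⟧_j` of an arithmetic formula under a parameter
assignment. -/
def jreal (j : Set ℕ → Set ℕ) : AFml → (ℕ → ℕ) → Set ℕ
  | .eq t s, ρ => if t.eval ρ = s.eval ρ then Set.univ else ∅
  | .and φ ψ, ρ => rAnd (jreal j φ ρ) (jreal j ψ ρ)
  | .or φ ψ, ρ => rOr (jreal j φ ρ) (jreal j ψ ρ)
  | .imp φ ψ, ρ => rImp (jreal j φ ρ) (j (jreal j ψ ρ))
  | .ex φ, ρ => ⋃ m : ℕ, rAnd {m} (jreal j φ (Env.cons m ρ))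
  | .all φ, ρ => ⋂ m : ℕ, rImp {m} (j (jreal j φ (Env.cons m ρ)))

/-! In a classical metatheory only inhabitedness matters: on it, `rImp` is Boolean implication,
because a constant function realizes any implication with an inhabited conclusion, and a local
operator `j` acts as `P ↦ P ∨ J`, where `J` says that `j ∅` is inhabited. Hence `j ⟦¬¬φ⟧_j` is
inhabited iff `((P → J) → J) ∨ J` holds, where `P` says that `⟦φ⟧_j` is inhabited, and classically
this is `P ∨ J`. -/

lemma rImp_nonempty {p q : Set ℕ} : (rImp p q).Nonempty ↔ (p.Nonempty → q.Nonempty) := by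
  constructor
  · rintro ⟨e, he⟩ ⟨n, hn⟩
    obtain ⟨m, -, hm⟩ := he n hn
    exact ⟨m, hm⟩
  · intro h
    rcases p.eq_empty_or_nonempty with rfl | hp
    · exact ⟨0, fun n hn => hn.elim⟩
    · obtain ⟨m, hm⟩ := h hp
      exact ⟨Encodable.encode (Nat.Partrec.Code.const m), fun n _ => ⟨m, by simp [kapp], hm⟩⟩

section LocalOperator

variable {j : Set ℕ → Set ℕ}

lemma nonempty_apply_of_isLop (hj : (isLop j).Nonempty) {p : Set ℕ} (hp : p.Nonempty) :
    (j p).Nonempty := by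
  obtain ⟨_, e, he, -⟩ := hj
  exact rImp_nonempty.mp ⟨e, Set.mem_iInter.mp he p⟩ hp

lemma nonempty_apply_mono_of_isLop (hj : (isLop j).Nonempty) {p q : Set ℕ}
    (hpq : p.Nonempty → q.Nonempty) (hp : (j p).Nonempty) : (j q).Nonempty := by
  obtain ⟨_, _, _, _, ⟨_, _, e, he, _⟩, _⟩ := hj
  have he_pq : e ∈ rImp (rImp p q) (rImp (j p) (j q)) := Set.mem_iInter₂.mp he p q
  exact rImp_nonempty.mp (rImp_nonempty.mp ⟨e, he_pq⟩ (rImp_nonempty.mpr hpq)) hp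

lemma nonempty_apply_iff_of_isLop (hj : (isLop j).Nonempty) (p : Set ℕ) :
    (j p).Nonempty ↔ p.Nonempty ∨ (j ∅).Nonempty := by
  constructor
  · intro h
    rcases p.eq_empty_or_nonempty with rfl | hp
    · exact .inr h
    · exact .inl hp
  · rintro (hp | h_empty)
    · exact nonempty_apply_of_isLop hj hp
    · exact nonempty_apply_mono_of_isLop hj (fun h => absurd h Set.not_nonempty_empty) h_empty

end LocalOperator

lemma jreal_bot (j : Set ℕ → Set ℕ) (ρ : ℕ → ℕ) : jreal j AFml.bot ρ = ∅ :=
  if_neg Nat.zero_ne_one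

lemma jreal_neg_nonempty (j : Set ℕ → Set ℕ) (φ : AFml) (ρ : ℕ → ℕ) :
    (jreal j φ.neg ρ).Nonempty ↔ ((jreal j φ ρ).Nonempty → (j ∅).Nonempty) := by
  rw [AFml.neg, jreal, jreal_bot, rImp_nonempty]

theorem jreal_dneg_elim_general {j : Set ℕ → Set ℕ}
    (hj : ∀ p, (j p).Nonempty ↔ p.Nonempty ∨ (j ∅).Nonempty)
    (φ : AFml) (ρ : ℕ → ℕ) (h : (j (jreal j φ.neg.neg ρ)).Nonempty) :
    (j (jreal j φ ρ)).Nonempty := by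
  rw [hj, jreal_neg_nonempty, jreal_neg_nonempty] at h
  rw [hj]
  by_cases hφ : (jreal j φ ρ).Nonempty
  · exact .inl hφ
  · exact .inr (h.elim (fun h_dneg => h_dneg fun hφ' => absurd hφ' hφ) id)

/-- Proposition 6.14 (limitation of `j`-realizability for double negations):
if the `j`-translation of `¬¬φ` is valid in the effective topos, then so is that
of `φ`. -/
theorem jreal_dneg_elim (j : Set ℕ → Set ℕ) (hj : (isLop j).Nonempty)
    (φ : AFml) (ρ : ℕ → ℕ) (h : (j (jreal j φ.neg.neg ρ)).Nonempty) :
    (j (jreal j φ ρ)).Nonempty :=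
  jreal_dneg_elim_general (nonempty_apply_iff_of_isLop hj) φ ρ h
end
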